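/- Let R be a binary predicate, A a unary predicate, and Q a ternary predicate. Let φ₁ be the GF sentence stating that R is irreflexive and symmetric, and let φ₂ be the conjunction of φ₁ with ∀x(Ax → ∀y(Rxy → ¬Ay)) ∧ ∀x(¬Ax → ∀y(Rxy → Ay)). Then: (1) φ₁ GF({R})-entails φ₂; but (2) for ψ = ∃x₁x₂x₃(Qx₁x₂x₃ ∧ Rx₁x₂ ∧ Rx₂x₃ ∧ Rx₃x₁), φ₂ ⊨ ¬ψ while φ₁ ∧ ψ is satisfiable, so φ₁ does not GF({R,Q})-entail φ₂. Hence in GF, GF(Σ)-entailment does not imply strong GF(Σ)-entailment. -/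

import Mathlib

/-! Core: relational first-order logic with equality, without function symbols
or constants, over an arbitrary signature of predicates with arities. -/

namespace FOG

/-- a relational vocabulary: predicate symbols with arities -/
structure Sig where
  Pred : Type
  ar : Pred → ℕ

/-- first-order formulas (with block quantifiers and `ℕ`-indexed variables) -/
inductive Fml (σ : Sig) : Type
  | rel (p : σ.Pred) (ts : Fin (σ.ar p) → ℕ)
  | eqv (i j : ℕ)
  | fls
  | neg (φ : Fml σ)
  | conj (φ ψ : Fml σ)
  | disj (φ ψ : Fml σ)
  | impl (φ ψ : Fml σ)
  | all (vs : List ℕ) (φ : Fml σ)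
  | ex (vs : List ℕ) (φ : Fml σ)

namespace Fml

variable {σ : Sig}

def free : Fml σ → Set ℕ
  | rel _ ts => Set.range ts
  | eqv i j => {i, j}
  | fls => ∅
  | neg φ => φ.free
  | conj φ ψ => φ.free ∪ ψ.free
  | disj φ ψ => φ.free ∪ ψ.free
  | impl φ ψ => φ.free ∪ ψ.free
  | all vs φ => φ.free \ {i | i ∈ vs}
  | ex vs φ => φ.free \ {i | i ∈ vs}

def IsSentence (φ : Fml σ) : Prop := φ.free = ∅

/-- the predicates occurring in a formula (equality is a logical symbol and
never part of a signature) -/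
def sig : Fml σ → Set σ.Pred
  | rel p _ => {p}
  | eqv _ _ => ∅
  | fls => ∅
  | neg φ => φ.sig
  | conj φ ψ => φ.sig ∪ ψ.sig
  | disj φ ψ => φ.sig ∪ ψ.sig
  | impl φ ψ => φ.sig ∪ ψ.sig
  | all _ φ => φ.sig
  | ex _ φ => φ.sig

def IsAtom : Fml σ → Prop
  | rel _ _ => True
  | eqv _ _ => True
  | _ => False

end Fml

structure Str (σ : Sig) where
  Dom : Type
  nonempty : Nonempty Dom
  rel : (p : σ.Pred) → (Fin (σ.ar p) → Dom) → Prop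

def Sat {σ : Sig} (A : Str σ) : Fml σ → (ℕ → A.Dom) → Prop
  | .rel p ts, v => A.rel p (fun i => v (ts i))
  | .eqv i j, v => v i = v j
  | .fls, _ => False
  | .neg φ, v => ¬ Sat A φ v
  | .conj φ ψ, v => Sat A φ v ∧ Sat A ψ v
  | .disj φ ψ, v => Sat A φ v ∨ Sat A ψ v
  | .impl φ ψ, v => Sat A φ v → Sat A ψ v
  | .all vs φ, v => ∀ v' : ℕ → A.Dom, (∀ i, i ∉ vs → v' i = v i) → Sat A φ v'
  | .ex vs φ, v => ∃ v' : ℕ → A.Dom, (∀ i, i ∉ vs → v' i = v i) ∧ Sat A φ v'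

def SatS {σ : Sig} (A : Str σ) (φ : Fml σ) : Prop := ∀ v, Sat A φ v

def Entails {σ : Sig} (φ ψ : Fml σ) : Prop := ∀ A : Str σ, SatS A φ → SatS A ψ

def Satisfiable {σ : Sig} (φ : Fml σ) : Prop := ∃ A : Str σ, SatS A φ

/-- The guarded fragment GF: quantification only in the patterns
`∀ȳ (α(x̄,ȳ) → φ(x̄,ȳ))` and `∃ȳ (α(x̄,ȳ) ∧ φ(x̄,ȳ))`, where the guard `α` is an
atomic formula containing all the variables of `x̄,ȳ`. -/
inductive IsGF {σ : Sig} : Fml σ → Prop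
  | rel (p : σ.Pred) (ts : Fin (σ.ar p) → ℕ) : IsGF (.rel p ts)
  | eqv (i j : ℕ) : IsGF (.eqv i j)
  | fls : IsGF .fls
  | neg {φ} : IsGF φ → IsGF (.neg φ)
  | conj {φ ψ} : IsGF φ → IsGF ψ → IsGF (.conj φ ψ)
  | disj {φ ψ} : IsGF φ → IsGF ψ → IsGF (.disj φ ψ)
  | impl {φ ψ} : IsGF φ → IsGF ψ → IsGF (.impl φ ψ)
  | allG {vs : List ℕ} {α φ : Fml σ} :
      α.IsAtom → IsGF φ → φ.free ∪ {i | i ∈ vs} ⊆ α.free →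
      IsGF (.all vs (.impl α φ))
  | exG {vs : List ℕ} {α φ : Fml σ} :
      α.IsAtom → IsGF φ → φ.free ∪ {i | i ∈ vs} ⊆ α.free →
      IsGF (.ex vs (.conj α φ))

/-- `φ₁` GF(Σ)-entails `φ₂` -/
def GFEntails {σ : Sig} (Sg : Set σ.Pred) (φ₁ φ₂ : Fml σ) : Prop :=
  ∀ ψ : Fml σ, IsGF ψ → ψ.IsSentence → ψ.sig ⊆ Sg →
    Entails φ₂ ψ → Entails φ₁ ψ

/-- `φ₁` strongly GF(Σ)-entails `φ₂` -/
def StrongGFEntails {σ : Sig} (Sg : Set σ.Pred) (φ₁ φ₂ : Fml σ) : Prop :=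
  ∀ Sg' : Set σ.Pred, Sg'.Finite → Sg' ∩ φ₂.sig ⊆ Sg → GFEntails Sg' φ₁ φ₂

end FOG

namespace FOG

/-- the signature of Example 3: a binary predicate R, a unary predicate A and
a ternary predicate Q -/
inductive P12 : Type
  | R
  | A
  | Q
deriving DecidableEq

def sig12 : Sig where
  Pred := P12
  ar := fun p => match p with
    | .R => 2
    | .A => 1
    | .Q => 3

def Rxy (i j : ℕ) : Fml sig12 := .rel P12.R ![i, j]
def Ax (i : ℕ) : Fml sig12 := .rel P12.A ![i]
def Qxyz (i j k : ℕ) : Fml sig12 := .rel P12.Q ![i, j, k]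

/-- `φ₁` : R is irreflexive and symmetric -/
def phi1 : Fml sig12 :=
  .conj (.all [0] (.impl (Rxy 0 0) .fls))
        (.all [0, 1] (.impl (Rxy 0 1) (Rxy 1 0)))

/-- `φ₂` : `φ₁` together with `∀x(Ax → ∀y(Rxy → ¬Ay)) ∧ ∀x(¬Ax → ∀y(Rxy → Ay))` -/
def phi2 : Fml sig12 :=
  .conj phi1
    (.conj (.all [0] (.impl (Ax 0) (.all [1] (.impl (Rxy 0 1) (.neg (Ax 1))))))
           (.all [0] (.impl (.neg (Ax 0)) (.all [1] (.impl (Rxy 0 1) (Ax 1))))))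

/-- `ψ = ∃x₁x₂x₃ (Qx₁x₂x₃ ∧ Rx₁x₂ ∧ Rx₂x₃ ∧ Rx₃x₁)` -/
def psi12 : Fml sig12 :=
  .ex [0, 1, 2] (.conj (Qxyz 0 1 2)
    (.conj (Rxy 0 1) (.conj (Rxy 1 2) (Rxy 2 0))))

def RR (A : Str sig12) (a b : A.Dom) : Prop := A.rel P12.R (![a, b] : Fin 2 → A.Dom)

theorem vec2 {D : Type} (f : Fin 2 → D) : f = ![f 0, f 1] := by
  funext i
  fin_cases i <;> rfl

theorem vec2' {D : Type} (v : ℕ → D) (i j : ℕ) :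
    (fun k : Fin 2 => v ((![i, j] : Fin 2 → ℕ) k)) = ![v i, v j] := vec2 _

theorem satR (A : Str sig12) (ts : Fin (sig12.ar P12.R) → ℕ) (v : ℕ → A.Dom) :
    Sat A (.rel P12.R ts) v ↔
      RR A (v ((show Fin 2 → ℕ from ts) 0)) (v ((show Fin 2 → ℕ from ts) 1)) := by
  have h := vec2 (fun i : Fin 2 => v ((show Fin 2 → ℕ from ts) i))
  unfold RR
  rw [← h]
  rfl

theorem satRxy (A : Str sig12) (i j : ℕ) (v : ℕ → A.Dom) :
    Sat A (Rxy i j) v ↔ RR A (v i) (v j) := satR A _ v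

def AA (A : Str sig12) (a : A.Dom) : Prop := A.rel P12.A (fun _ : Fin 1 => a)

theorem satAx (A : Str sig12) (i : ℕ) (v : ℕ → A.Dom) :
    Sat A (Ax i) v ↔ AA A (v i) := by
  have h : (fun k : Fin 1 => v ((![i] : Fin 1 → ℕ) k)) = fun _ => v i := by
    funext k
    fin_cases k
    rfl
  unfold AA
  rw [← h]
  rfl

theorem phi1_iff (A : Str sig12) : SatS A phi1 ↔
    (∀ a, ¬ RR A a a) ∧ (∀ a b, RR A a b → RR A b a) := by
  unfold SatS phi1
  simp only [Sat, satRxy]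
  constructor
  · intro h
    constructor
    · intro a ha
      exact (h (fun _ => a)).1 (fun _ => a) (fun _ _ => rfl) ha
    · intro a b hab
      have := (h (fun _ => a)).2 (fun n => if n = 1 then b else a)
        (fun i hi => by
          have : i ≠ 1 := by
            rintro rfl
            simp at hi
          simp [this])
      simpa using this (by simpa using hab)
  · rintro ⟨h1, h2⟩ v
    exact ⟨fun v' _ h => h1 _ h, fun v' _ h => h2 _ _ h⟩

theorem phi2_iff (A : Str sig12) : SatS A phi2 ↔
    SatS A phi1 ∧ (∀ a b, RR A a b → AA A a → ¬ AA A b) ∧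
      (∀ a b, RR A a b → ¬ AA A a → AA A b) := by
  have key : ∀ a b : A.Dom, ∀ i, i ∉ [1] → (fun n => if n = 1 then b else a) i = a := by
    intro a b i hi
    have : i ≠ 1 := by
      rintro rfl
      simp at hi
    simp [this]
  constructor
  · intro h
    refine ⟨fun v => (h v).1, ?_, ?_⟩
    · intro a b hab ha
      have h1 := (h (fun _ => a)).2.1 (fun _ => a) (fun _ _ => rfl)
      simp only [Sat, satRxy, satAx] at h1
      simpa using h1 ha (fun n => if n = 1 then b else a) (key a b) (by simpa using hab)
    · intro a b hab ha
      have h1 := (h (fun _ => a)).2.2 (fun _ => a) (fun _ _ => rfl)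
      simp only [Sat, satRxy, satAx] at h1
      simpa using h1 ha (fun n => if n = 1 then b else a) (key a b) (by simpa using hab)
  · rintro ⟨h0, h1, h2⟩ v
    refine ⟨h0 v, ?_, ?_⟩
    · simp only [Sat, satRxy, satAx]
      intro v' _ ha v'' hv hR
      rw [← hv 0 (by simp)] at ha
      exact h1 _ _ hR ha
    · simp only [Sat, satRxy, satAx]
      intro v' _ ha v'' hv hR
      rw [← hv 0 (by simp)] at ha
      exact h2 _ _ hR ha

/-- the bipartite double cover -/
def cover (A : Str sig12) : Str sig12 where
  Dom := A.Dom × Bool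
  nonempty := A.nonempty.elim fun a => ⟨(a, true)⟩
  rel := fun p => match p with
    | .R => fun f : Fin 2 → A.Dom × Bool => RR A (f 0).1 (f 1).1 ∧ (f 0).2 ≠ (f 1).2
    | .A => fun f : Fin 1 → A.Dom × Bool => (f 0).2 = true
    | .Q => fun _ => False

theorem cover_phi2 (A : Str sig12) (h : SatS A phi1) : SatS (cover A) phi2 := by
  rw [phi1_iff] at h
  rw [phi2_iff, phi1_iff]
  refine ⟨⟨?_, ?_⟩, ?_, ?_⟩
  · rintro a ⟨_, h2⟩
    exact h2 rfl
  · rintro a b ⟨h1, h2⟩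
    exact ⟨h.2 _ _ h1, fun e => h2 e.symm⟩
  · rintro ⟨a, x⟩ ⟨b, y⟩ ⟨h1, h2⟩ (h3 : x = true) (h4 : y = true)
    exact h2 (h3.trans h4.symm)
  · rintro ⟨a, x⟩ ⟨b, y⟩ ⟨h1, h2⟩ (h3 : ¬ x = true)
    change y = true
    change x ≠ y at h2
    cases x <;> cases y <;> simp_all

def Good (A : Str sig12) (S : Set ℕ) (v : ℕ → A.Dom × Bool) : Prop :=
  ∀ i ∈ S, ∀ j ∈ S, ((v i).1 = (v j).1 → v i = v j) ∧
    (RR A (v i).1 (v j).1 → (v i).2 ≠ (v j).2)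

theorem Good.mono {A : Str sig12} {S T : Set ℕ} {v : ℕ → A.Dom × Bool}
    (h : Good A T v) (hST : S ⊆ T) : Good A S v :=
  fun i hi j hj => h i (hST hi) j (hST hj)

theorem atom_good (A : Str sig12) (α : Fml sig12) (hα : α.IsAtom) (hs : α.sig ⊆ {P12.R})
    (v : ℕ → A.Dom × Bool) (hg : Good A α.free v) :
    Sat (cover A) α v ↔ Sat A α (fun i => (v i).1) := by
  cases α with
  | rel p ts =>
    obtain rfl : p = P12.R := hs rfl
    refine (satR (cover A) ts v).trans (Iff.trans ?_ (satR A ts (fun i => (v i).1)).symm)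
    constructor
    · exact fun h => h.1
    · exact fun h => ⟨h, (hg _ ⟨_, rfl⟩ _ ⟨_, rfl⟩).2 h⟩
  | eqv i j =>
    constructor
    · exact fun h => congrArg Prod.fst h
    · exact fun h => (hg i (Or.inl rfl) j (Or.inr rfl)).1 h
  | _ => exact hα.elim

theorem atom_shape (α : Fml sig12) (hα : α.IsAtom) (hs : α.sig ⊆ {P12.R}) :
    ∃ x y, α.free = {x, y} ∧ ∀ A : Str sig12, ∀ v, Sat A α v → RR A (v x) (v y) ∨ v x = v y := by
  cases α with
  | rel p ts =>
    obtain rfl : p = P12.R := hs rfl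
    refine ⟨(show Fin 2 → ℕ from ts) 0, (show Fin 2 → ℕ from ts) 1, ?_, ?_⟩
    · ext k
      change (∃ i : Fin 2, (show Fin 2 → ℕ from ts) i = k) ↔ _
      rw [Fin.exists_fin_two]
      simp [eq_comm]
    · intro A v h
      exact Or.inl ((satR A ts v).1 h)
  | eqv i j => exact ⟨i, j, rfl, fun A v h => Or.inr h⟩
  | _ => exact hα.elim

theorem good_of_cover (A : Str sig12) (hA : SatS A phi1) (x y : ℕ) (v : ℕ → A.Dom × Bool)
    (h : RR (cover A) (v x) (v y) ∨ v x = v y) : Good A {x, y} v := by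
  rw [phi1_iff] at hA
  obtain ⟨hi, hsym⟩ := hA
  rcases h with ⟨h1, h2⟩ | h
  · change RR A (v x).1 (v y).1 at h1
    change (v x).2 ≠ (v y).2 at h2
    have hne : (v x).1 ≠ (v y).1 := by
      intro e
      rw [e] at h1
      exact hi _ h1
    rintro i (rfl | rfl) j (rfl | rfl)
    · exact ⟨fun _ => rfl, fun h => (hi _ h).elim⟩
    · exact ⟨fun h => (hne h).elim, fun _ => h2⟩
    · exact ⟨fun h => (hne h.symm).elim, fun _ => h2.symm⟩
    · exact ⟨fun _ => rfl, fun h => (hi _ h).elim⟩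
  · rintro i (rfl | rfl) j (rfl | rfl) <;>
      simp [h, hi]

theorem lift_exists (A : Str sig12) (hA : SatS A phi1) (x y : ℕ) (vs : List ℕ)
    (hvs : ∀ i ∈ vs, i = x ∨ i = y)
    (v : ℕ → A.Dom × Bool) (hg : Good A ({x, y} \ {i | i ∈ vs}) v) (v' : ℕ → A.Dom)
    (hv : ∀ i, i ∉ vs → v' i = (v i).1) (h : RR A (v' x) (v' y) ∨ v' x = v' y) :
    ∃ w : ℕ → A.Dom × Bool, (∀ i, i ∉ vs → w i = v i) ∧ (fun i => (w i).1) = v' ∧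
      Good A {x, y} w := by
  classical
  have hA' := (phi1_iff A).1 hA
  obtain ⟨hi, hsym⟩ := hA'
  obtain ⟨e, hx, hy, hR⟩ : ∃ e : A.Dom → Bool, (x ∉ vs → e (v' x) = (v x).2) ∧
      (y ∉ vs → e (v' y) = (v y).2) ∧ (RR A (v' x) (v' y) → e (v' x) ≠ e (v' y)) := by
    by_cases hxv : x ∈ vs
    · refine ⟨fun a => if a = v' y then (v y).2 else !(v y).2, fun h => (h hxv).elim,
        fun _ => by simp, fun hr => ?_⟩
      have : v' x ≠ v' y := by
        intro e
        rw [e] at hr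
        exact hi _ hr
      simp [this]
    · refine ⟨fun a => if a = v' x then (v x).2 else !(v x).2, fun _ => by simp,
        fun hyv => ?_, fun hr => ?_⟩
      · have g := hg x ⟨Or.inl rfl, hxv⟩ y ⟨Or.inr rfl, hyv⟩
        rw [← hv x hxv, ← hv y hyv] at g
        by_cases e : v' y = v' x
        · simp [e, g.1 e.symm]
        · have g2 := g.2 (h.resolve_right (fun h => e h.symm))
          simp only [e, if_false]
          revert g2
          cases (v x).2 <;> cases (v y).2 <;> simp
      · have : v' y ≠ v' x := by
          intro e
          rw [e] at hr
          exact hi _ hr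
        simp [this]
  let w : ℕ → A.Dom × Bool := fun i => if i ∈ vs then (v' i, e (v' i)) else v i
  have w1 : ∀ i, (w i).1 = v' i := by
    intro i
    by_cases hiv : i ∈ vs
    · simp [w, hiv]
    · simp [w, hiv, hv i hiv]
  have wx : w x = (v' x, e (v' x)) := by
    by_cases hxv : x ∈ vs
    · simp [w, hxv]
    · rw [hx hxv, hv x hxv]
      simp [w, hxv]
  have wy : w y = (v' y, e (v' y)) := by
    by_cases hyv : y ∈ vs
    · simp [w, hyv]
    · rw [hy hyv, hv y hyv]
      simp [w, hyv]
  refine ⟨w, fun i hiv => by simp [w, hiv], funext w1, ?_⟩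
  apply good_of_cover A hA
  rw [wx, wy]
  rcases h with h | h
  · exact Or.inl ⟨h, hR h⟩
  · exact Or.inr (by rw [h])

theorem invariance (A : Str sig12) (hA : SatS A phi1) (φ : Fml sig12) (hφ : IsGF φ) :
    φ.sig ⊆ {P12.R} → ∀ v : ℕ → A.Dom × Bool, Good A φ.free v →
      (Sat (cover A) φ v ↔ Sat A φ (fun i => (v i).1)) := by
  induction hφ with
  | rel p ts => exact fun hs v hg => atom_good A (.rel p ts) trivial hs v hg
  | eqv i j => exact fun hs v hg => atom_good A (.eqv i j) trivial hs v hg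
  | fls => exact fun _ _ _ => Iff.rfl
  | neg _ ih => exact fun hs v hg => not_congr (ih hs v hg)
  | conj _ _ ih1 ih2 =>
    exact fun hs v hg => and_congr
      (ih1 (Set.subset_union_left.trans hs) v (hg.mono Set.subset_union_left))
      (ih2 (Set.subset_union_right.trans hs) v (hg.mono Set.subset_union_right))
  | disj _ _ ih1 ih2 =>
    exact fun hs v hg => or_congr
      (ih1 (Set.subset_union_left.trans hs) v (hg.mono Set.subset_union_left))
      (ih2 (Set.subset_union_right.trans hs) v (hg.mono Set.subset_union_right))
  | impl _ _ ih1 ih2 =>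
    exact fun hs v hg => imp_congr
      (ih1 (Set.subset_union_left.trans hs) v (hg.mono Set.subset_union_left))
      (ih2 (Set.subset_union_right.trans hs) v (hg.mono Set.subset_union_right))
  | @allG vs α φ hα _ hsub ih =>
    intro hs v hg
    have hsα : α.sig ⊆ {P12.R} := Set.subset_union_left.trans hs
    have hsφ : φ.sig ⊆ {P12.R} := Set.subset_union_right.trans hs
    have hφf : φ.free ⊆ α.free := Set.subset_union_left.trans hsub
    have hvs : ∀ i ∈ vs, i ∈ α.free := fun i hi => hsub (Or.inr hi)
    have hg' : Good A (α.free \ {i | i ∈ vs}) v :=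
      hg.mono (fun i hi => ⟨Or.inl hi.1, hi.2⟩)
    obtain ⟨x, y, hf, hsat⟩ := atom_shape α hα hsα
    have IH := fun w (hw : Good A α.free w) => ih hsφ w (hw.mono hφf)
    have AT := fun w (hw : Good A α.free w) => atom_good A α hα hsα w hw
    rw [hf] at hg' hvs IH AT
    constructor
    · intro h v' hv' ha
      obtain ⟨w, hw1, hw2, hw3⟩ := lift_exists A hA x y vs hvs v hg' v' hv' (hsat A v' ha)
      have := h w hw1 ((AT w hw3).2 (by rw [hw2]; exact ha))
      rw [← hw2]
      exact (IH w hw3).1 this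
    · intro h w hw ha
      have gw := good_of_cover A hA x y w (hsat (cover A) w ha)
      exact (IH w gw).2 (h _ (fun i hi => congrArg Prod.fst (hw i hi)) ((AT w gw).1 ha))
  | @exG vs α φ hα _ hsub ih =>
    intro hs v hg
    have hsα : α.sig ⊆ {P12.R} := Set.subset_union_left.trans hs
    have hsφ : φ.sig ⊆ {P12.R} := Set.subset_union_right.trans hs
    have hφf : φ.free ⊆ α.free := Set.subset_union_left.trans hsub
    have hvs : ∀ i ∈ vs, i ∈ α.free := fun i hi => hsub (Or.inr hi)
    have hg' : Good A (α.free \ {i | i ∈ vs}) v :=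
      hg.mono (fun i hi => ⟨Or.inl hi.1, hi.2⟩)
    obtain ⟨x, y, hf, hsat⟩ := atom_shape α hα hsα
    have IH := fun w (hw : Good A α.free w) => ih hsφ w (hw.mono hφf)
    have AT := fun w (hw : Good A α.free w) => atom_good A α hα hsα w hw
    rw [hf] at hg' hvs IH AT
    constructor
    · rintro ⟨w, hw, ha, hb⟩
      have gw := good_of_cover A hA x y w (hsat (cover A) w ha)
      exact ⟨_, fun i hi => congrArg Prod.fst (hw i hi), (AT w gw).1 ha, (IH w gw).1 hb⟩
    · rintro ⟨v', hv', ha, hb⟩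
      obtain ⟨w, hw1, hw2, hw3⟩ := lift_exists A hA x y vs hvs v hg' v' hv' (hsat A v' ha)
      exact ⟨w, hw1, (AT w hw3).2 (by rw [hw2]; exact ha), (IH w hw3).2 (by rw [hw2]; exact hb)⟩

theorem part1 : GFEntails (σ := sig12) {P12.R} phi1 phi2 := by
  intro ψ hψ hsent hs hent A hA v
  have h := hent (cover A) (cover_phi2 A hA) (fun i => (v i, true))
  refine (invariance A hA ψ hψ hs (fun i => (v i, true)) ?_).1 h
  intro i hi
  rw [hsent] at hi
  exact hi.elim

theorem part2 : Entails phi2 (.neg psi12) := by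
  intro A hA v
  rw [phi2_iff] at hA
  obtain ⟨_, h1, h2⟩ := hA
  rintro ⟨v', _, _, h01, h12, h20⟩
  rw [satRxy] at h01 h12 h20
  by_cases a0 : AA A (v' 0)
  · exact h1 _ _ h20 (h2 _ _ h12 (h1 _ _ h01 a0)) a0
  · exact a0 (h2 _ _ h20 (h1 _ _ h12 (h2 _ _ h01 a0)))

def triangle : Str sig12 where
  Dom := Fin 3
  nonempty := ⟨0⟩
  rel := fun p => match p with
    | .R => fun f : Fin 2 → Fin 3 => f 0 ≠ f 1
    | .A => fun _ => True
    | .Q => fun _ => True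

theorem part3 : Satisfiable (.conj phi1 psi12) := by
  refine ⟨triangle, fun v => ⟨?_, ?_⟩⟩
  · refine (phi1_iff triangle).2 ⟨?_, ?_⟩ v
    · exact fun a h => h rfl
    · exact fun a b h => Ne.symm h
  · refine ⟨fun n => if n = 0 then (0 : Fin 3) else if n = 1 then (1 : Fin 3)
      else if n = 2 then (2 : Fin 3) else v n, ?_, trivial, ?_, ?_, ?_⟩
    · intro i hi
      simp at hi
      simp [hi]
    · rw [satRxy]
      change (0 : Fin 3) ≠ 1
      decide
    · rw [satRxy]
      change (1 : Fin 3) ≠ 2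
      decide
    · rw [satRxy]
      change (2 : Fin 3) ≠ 0
      decide

theorem freeR (i j : ℕ) : (Rxy i j).free = {i, j} := by
  ext k
  change (∃ a : Fin 2, (![i, j] : Fin 2 → ℕ) a = k) ↔ _
  rw [Fin.exists_fin_two]
  simp [eq_comm]

theorem freeQ (i j l : ℕ) : (Qxyz i j l).free = {i, j, l} := by
  ext k
  change (∃ a : Fin 3, (![i, j, l] : Fin 3 → ℕ) a = k) ↔ _
  simp [Fin.exists_fin_succ, eq_comm]

theorem psi_free : psi12.free = ∅ := by
  ext k
  simp only [psi12, Fml.free, freeR, freeQ]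
  simp
  omega

theorem psi_gf : IsGF psi12 := by
  refine IsGF.exG trivial (.conj (.rel _ _) (.conj (.rel _ _) (.rel _ _))) ?_
  intro k
  simp only [Fml.free, freeR, freeQ]
  simp
  omega

theorem psi_sig : psi12.sig ⊆ ({P12.R, P12.Q} : Set P12) := by
  intro p
  simp only [psi12, Fml.sig, Rxy, Qxyz]
  rintro (h | h | h | h)
  · exact Or.inr h
  · exact Or.inl h
  · exact Or.inl h
  · exact Or.inl h

theorem part4 : ¬ GFEntails (σ := sig12) {P12.R, P12.Q} phi1 phi2 := by
  intro h
  obtain ⟨A, hA⟩ := part3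
  obtain ⟨a⟩ := A.nonempty
  exact h (.neg psi12) (.neg psi_gf) psi_free psi_sig part2 A (fun v => (hA v).1) (fun _ => a)
    (hA _).2

theorem part5 : ¬ StrongGFEntails (σ := sig12) {P12.R} phi1 phi2 := by
  intro h
  refine part4 (h {P12.R, P12.Q} ((Set.finite_singleton _).insert _) ?_)
  rintro p ⟨rfl | rfl, hp⟩
  · rfl
  · simp only [phi2, phi1, Fml.sig, Rxy, Ax] at hp
    exfalso
    rcases hp with ((h | h) | h | h) <;>
      (repeat (rcases h with h | h)) <;> cases h

/-- Example 3 of the paper: `φ₁` GF({R})-entails `φ₂`,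
but `φ₂ ⊨ ¬ψ` while `φ₁ ∧ ψ` is satisfiable, so `φ₁` does not
GF({R,Q})-entail `φ₂`; hence GF(Σ)-entailment does not imply strong
GF(Σ)-entailment. -/
theorem gf_entailment_does_not_imply_strong_gf_entailment :
    GFEntails (σ := sig12) {P12.R} phi1 phi2 ∧
    Entails phi2 (.neg psi12) ∧
    Satisfiable (.conj phi1 psi12) ∧
    ¬ GFEntails (σ := sig12) {P12.R, P12.Q} phi1 phi2 ∧
    ¬ StrongGFEntails (σ := sig12) {P12.R} phi1 phi2 := by
  exact ⟨part1, part2, part3, part4, part5⟩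

end FOG
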